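/- arXiv:2512.18042 — 3 statements merged into one kernel-verified Lean document; each statement's English description precedes it below -/
import Mathlib

section
/- Let G be a finite group, H ≤ G a subgroup, ψ ∈ Irr(H), and suppose χ = ψ^G (the induced character) is irreducible. Then for every field automorphism τ of ℚ(ψ) fixing ℚ(χ) pointwise, the Galois conjugate ψ^τ is also an irreducible constituent of the restriction χ_H, and consequently χ(1) ≥ [ℚ(ψ) : ℚ(χ)] · ψ(1). -/
open scoped Classical

/-- The field of values of a character `χ`. -/
noncomputable def Qfield {G : Type*} (χ : G → ℂ) : IntermediateField ℚ ℂ :=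
  IntermediateField.adjoin ℚ (Set.range χ)

/-- The `n`-th cyclotomic field inside `ℂ`. -/
noncomputable def Qcyc (n : ℕ) : IntermediateField ℚ ℂ :=
  IntermediateField.adjoin ℚ {x : ℂ | x ^ n = 1}

/-- The conductor of an abelian number field. -/
noncomputable def condF (F : IntermediateField ℚ ℂ) : ℕ :=
  sInf {n : ℕ | 0 < n ∧ F ≤ Qcyc n}

/-- Relative degree `[L : K]` via absolute degrees. -/
noncomputable def relDeg (K L : IntermediateField ℚ ℂ) : ℕ :=
  Module.finrank ℚ L / Module.finrank ℚ K

/-- `χ` is the character of a `d`-dimensional irreducible complex representation. -/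
def IsIrrCharOfDeg (G : Type*) [Group G] (χ : G → ℂ) (d : ℕ) : Prop :=
  ∃ ρ : Representation ℂ G (Fin d → ℂ),
    IsSimpleModule (MonoidAlgebra ℂ G) ρ.asModule ∧
    ∀ g, χ g = LinearMap.trace ℂ (Fin d → ℂ) (ρ g)

/-- `χ` is an irreducible complex character of `G`. -/
def IsIrrChar (G : Type*) [Group G] (χ : G → ℂ) : Prop :=
  ∃ d, IsIrrCharOfDeg G χ d

/-- `χ` is a complex character of `G`. -/
def IsChar (G : Type*) [Group G] (χ : G → ℂ) : Prop :=
  ∃ (d : ℕ) (ρ : Representation ℂ G (Fin d → ℂ)),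
    ∀ g, χ g = LinearMap.trace ℂ (Fin d → ℂ) (ρ g)

/-- Inner product of class functions. -/
noncomputable def innerChar {H : Type*} [Fintype H] (α β : H → ℂ) : ℂ :=
  (Fintype.card H : ℂ)⁻¹ * ∑ h, α h * (starRingEnd ℂ) (β h)

/-- The induced character `ψ^G`. -/
noncomputable def inducedChar {G : Type*} [Group G] [Fintype G] (H : Subgroup G)
    (ψ : H → ℂ) (g : G) : ℂ :=
  (Nat.card H : ℂ)⁻¹ *
    ∑ x : G, if h : x⁻¹ * g * x ∈ H then ψ ⟨x⁻¹ * g * x, h⟩ else 0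

open Cardinal
theorem aux_ext_gen {K L1 L2 : Type} [Field K] [Field L1] [Field L2] [Algebra K L1] [Algebra K L2]
    [IsAlgClosed L1] [IsAlgClosed L2] (hK : #K ≤ ℵ₀) (h1 : ℵ₀ < #L1) (h12 : #L1 = #L2) :
    ∃ e : L1 ≃+* L2, ∀ x, e (algebraMap K L1 x) = algebraMap K L2 x := by
  obtain ⟨s, hs⟩ := exists_isTranscendenceBasis K L1
  obtain ⟨t, ht⟩ := exists_isTranscendenceBasis K L2
  have a := IsAlgClosed.cardinal_eq_cardinal_transcendence_basis_of_aleph0_lt' _ hs hK h1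
  have b := IsAlgClosed.cardinal_eq_cardinal_transcendence_basis_of_aleph0_lt' _ ht hK (h12 ▸ h1)
  obtain ⟨e⟩ := Cardinal.eq.1 (a.symm.trans (h12.trans b))
  let _ := IsAlgClosed.isAlgClosure_of_transcendence_basis _ hs
  let _ := IsAlgClosed.isAlgClosure_of_transcendence_basis _ ht
  let E : Algebra.adjoin K (Set.range ((↑) : s → L1)) ≃ₐ[K]
      Algebra.adjoin K (Set.range ((↑) : t → L2)) :=
    hs.1.aevalEquiv.symm.trans ((MvPolynomial.renameEquiv K e).trans ht.1.aevalEquiv)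
  refine ⟨IsAlgClosure.equivOfEquiv L1 L2 E.toRingEquiv, fun x => ?_⟩
  have := IsAlgClosure.equivOfEquiv_algebraMap L1 L2 E.toRingEquiv (algebraMap K _ x)
  rw [← IsScalarTower.algebraMap_apply] at this
  rw [this]
  change algebraMap _ L2 (E (algebraMap K _ x)) = _
  rw [E.commutes, ← IsScalarTower.algebraMap_apply]

theorem aux_ext {K : IntermediateField ℚ ℂ} (hK : #K ≤ ℵ₀) (φ : K →+* ℂ) :
    ∃ e : ℂ ≃+* ℂ, ∀ x : K, e x = φ x :=
  @aux_ext_gen K ℂ ℂ _ _ _ _ φ.toAlgebra _ _ hK (by simp [Cardinal.mk_complex, Cardinal.aleph0_lt_continuum]) rfl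

theorem aux_frob {G : Type*} [Group G] [Fintype G] (H : Subgroup G)
    (ψ : ↥H → ℂ) (χ : G → ℂ) (hcl : ∀ g x, χ (x * g * x⁻¹) = χ g)
    (hind : ∀ g, χ g = (Nat.card H : ℂ)⁻¹ *
      ∑ x : G, if h : x⁻¹ * g * x ∈ H then ψ ⟨x⁻¹ * g * x, h⟩ else 0)
    (hn : ∑ g, χ g * χ g⁻¹ = Nat.card G) :
    ∑ h : H, χ h * ψ h⁻¹ = Nat.card H := by
  have h1 : ∑ g, χ g * χ g⁻¹ = (Nat.card H : ℂ)⁻¹ * ∑ x : G, ∑ h : H, χ h * ψ h⁻¹ := by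
    simp_rw [fun g : G => hind g⁻¹, mul_left_comm (χ _), Finset.mul_sum]
    rw [Finset.sum_comm]
    refine Finset.sum_congr rfl fun x _ => ?_
    rw [← Finset.mul_sum, ← Finset.mul_sum]
    congr 1
    rw [← Equiv.sum_comp (MulAut.conj x).toEquiv]
    have : ∀ k : G, (χ ((MulAut.conj x).toEquiv k) * if h : x⁻¹ * ((MulAut.conj x).toEquiv k)⁻¹ * x ∈ H then
        ψ ⟨_, h⟩ else 0) = if h : k ∈ H then χ k * ψ (⟨k, h⟩ : H)⁻¹ else 0 := by
      intro k
      have e1 : x⁻¹ * ((MulAut.conj x).toEquiv k)⁻¹ * x = k⁻¹ := by simp [mul_assoc]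
      have e2 : χ ((MulAut.conj x).toEquiv k) = χ k := by simp [hcl]
      rw [e2]
      by_cases hk : k ∈ H
      · rw [dif_pos (by rw [e1]; exact inv_mem hk), dif_pos hk]
        congr 2
        exact Subtype.ext e1
      · rw [dif_neg (by rw [e1]; simpa using hk), dif_neg hk, mul_zero]
    rw [Finset.sum_congr rfl fun k _ => this k]
    symm
    refine Finset.sum_of_injOn Subtype.val Subtype.val_injective.injOn (by simp) ?_ ?_
    · intro k _ hk
      rw [dif_neg]
      intro hkH
      exact hk ⟨⟨k, hkH⟩, by simp, rfl⟩
    · intro h _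
      rw [dif_pos h.2]
  have hG : (Nat.card G : ℂ) ≠ 0 := by simp
  have hH : (Nat.card H : ℂ) ≠ 0 := by simp
  rw [hn] at h1
  simp only [Finset.sum_const, Finset.card_univ, nsmul_eq_mul, ← Nat.card_eq_fintype_card] at h1
  field_simp at h1
  exact h1.symm

theorem aux_conj {H : Type*} [Group H] [Fintype H] {d : ℕ} (ρ : Representation ℂ H (Fin d → ℂ))
    (h : H) : LinearMap.trace ℂ _ (ρ h⁻¹) = (starRingEnd ℂ) (LinearMap.trace ℂ _ (ρ h)) := by
  let M : H →* Matrix (Fin d) (Fin d) ℂ :=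
    (LinearMap.toMatrixAlgEquiv' : _ ≃ₐ[ℂ] Matrix (Fin d) (Fin d) ℂ).toAlgHom.toRingHom.toMonoidHom.comp ρ
  have htr : ∀ g, LinearMap.trace ℂ _ (ρ g) = (M g).trace := by
    intro g
    rw [← Matrix.trace_toLin'_eq]
    congr 1
    exact (Matrix.toLin'_toMatrix' (ρ g)).symm
  open scoped Matrix ComplexOrder in
  let P : Matrix (Fin d) (Fin d) ℂ := ∑ g, (M g)ᴴ * M g
  have hP : IsUnit P := by
    open scoped Matrix ComplexOrder in
    have : P.PosDef := by
      change (∑ g, (M g)ᴴ * M g).PosDef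
      rw [← Finset.add_sum_erase _ _ (Finset.mem_univ (1 : H))]
      refine Matrix.PosDef.add_posSemidef ?_ ?_
      · simpa using Matrix.PosDef.one
      · exact Matrix.posSemidef_sum _ fun g _ => Matrix.posSemidef_conjTranspose_mul_self _
    exact this.isUnit
  have hinv : M h⁻¹ * M h = 1 := by rw [← map_mul]; simp
  have hinv' : M h * M h⁻¹ = 1 := by rw [← map_mul]; simp
  open scoped Matrix in
  have key : (M h)ᴴ * P = P * M h⁻¹ := by
    have : (M h)ᴴ * P * M h = P := by
      simp only [P, Finset.mul_sum, Finset.sum_mul]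
      refine Fintype.sum_equiv (Equiv.mulRight h) _ _ fun g => ?_
      simp [map_mul, Matrix.conjTranspose_mul, mul_assoc]
    calc (M h)ᴴ * P = (M h)ᴴ * P * (M h * M h⁻¹) := by rw [hinv', mul_one]
      _ = _ := by rw [← mul_assoc, this]
  obtain ⟨u, hu⟩ := hP
  rw [← hu] at key
  have k2 : M h⁻¹ = (↑u⁻¹ : Matrix (Fin d) (Fin d) ℂ) * (M h).conjTranspose * u := by
    rw [mul_assoc, key, Units.inv_mul_cancel_left]
  rw [htr, htr, k2, Matrix.trace_units_conj', Matrix.trace_conjTranspose]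
  rfl

theorem aux_norm {G : Type*} [Group G] [Fintype G] {n : ℕ} (ρ : Representation ℂ G (Fin n → ℂ))
    (hρ : IsSimpleModule (MonoidAlgebra ℂ G) ρ.asModule) :
    ∑ g, ρ.character g * ρ.character g⁻¹ = Nat.card G := by
  have : ρ.IsIrreducible := (ρ.irreducible_iff_isSimpleModule_asModule).2 hρ
  have hG : (Nat.card G : ℂ) ≠ 0 := by simp
  let _ := invertibleOfNonzero hG
  have := Representation.char_orthonormal ρ ρ
  rw [if_pos ⟨Representation.Equiv.refl ρ⟩] at this
  field_simp at this
  simpa using this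

/-- Twist a subrepresentation by a field automorphism. -/
def auxTwist {H : Type*} [Group H] {m : ℕ} (σ : ℂ ≃+* ℂ) {ρ ρ' : Representation ℂ H (Fin m → ℂ)}
    (hc : ∀ h v, ρ' h (σ ∘ v) = σ ∘ (ρ h v)) (W : Subrepresentation ρ') : Subrepresentation ρ where
  toSubmodule :=
    { carrier := {v | σ ∘ v ∈ W.toSubmodule}
      add_mem' := by
        intro a b ha hb
        have : σ ∘ (a + b) = σ ∘ a + σ ∘ b := by ext; simp
        simp only [Set.mem_ofPred_eq] at *
        rw [this]; exact add_mem ha hb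
      zero_mem' := by
        have : σ ∘ (0 : Fin m → ℂ) = 0 := by ext; simp
        simp only [Set.mem_ofPred_eq]
        rw [this]; exact zero_mem _
      smul_mem' := by
        intro c a ha
        have : σ ∘ (c • a) = σ c • (σ ∘ a) := by ext; simp
        simp only [Set.mem_ofPred_eq] at *
        rw [this]; exact Submodule.smul_mem _ _ ha }
  apply_mem_toSubmodule g v hv := by
    change σ ∘ (ρ g v) ∈ W.toSubmodule
    rw [← hc]
    exact W.apply_mem_toSubmodule g hv

theorem aux_gal {H : Type*} [Group H] {m : ℕ} (σ : ℂ ≃+* ℂ) (ρ : Representation ℂ H (Fin m → ℂ))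
    (hρ : IsSimpleModule (MonoidAlgebra ℂ H) ρ.asModule) :
    ∃ ρ' : Representation ℂ H (Fin m → ℂ), IsSimpleModule (MonoidAlgebra ℂ H) ρ'.asModule ∧
      ∀ h, LinearMap.trace ℂ _ (ρ' h) = σ (LinearMap.trace ℂ _ (ρ h)) := by
  let ρ' : Representation ℂ H (Fin m → ℂ) :=
    (Matrix.toLinAlgEquiv' : Matrix (Fin m) (Fin m) ℂ ≃ₐ[ℂ] _).toAlgHom.toRingHom.toMonoidHom.comp
    ((σ.toRingHom.mapMatrix (m := Fin m)).toMonoidHom.comp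
    ((LinearMap.toMatrixAlgEquiv' : _ ≃ₐ[ℂ] Matrix (Fin m) (Fin m) ℂ).toAlgHom.toRingHom.toMonoidHom.comp ρ))
  have h' : ∀ h, ρ' h = Matrix.toLin' ((LinearMap.toMatrix' (ρ h)).map σ) := fun h => rfl
  have hc : ∀ h v, ρ' h (σ ∘ v) = σ ∘ (ρ h v) := by
    intro h v
    conv_rhs => rw [← Matrix.toLin'_toMatrix' (ρ h)]
    rw [h']
    ext i
    simp only [Matrix.toLin'_apply, Matrix.mulVec, dotProduct, Matrix.map_apply, Function.comp_apply,
      map_sum, map_mul]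
  have hc' : ∀ h v, ρ h (σ.symm ∘ v) = σ.symm ∘ (ρ' h v) := by
    intro h v
    have := hc h (σ.symm ∘ v)
    have e : σ ∘ σ.symm ∘ v = v := by ext; simp
    rw [e] at this
    rw [this]; ext; simp
  let E : Subrepresentation ρ' ≃o Subrepresentation ρ :=
    { toFun := auxTwist σ hc
      invFun := auxTwist σ.symm hc'
      left_inv W := by
        apply SetLike.ext; intro v
        change σ ∘ σ.symm ∘ v ∈ W ↔ v ∈ W
        rw [show σ ∘ σ.symm ∘ v = v by ext; simp]
      right_inv W := by
        apply SetLike.ext; intro v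
        change σ.symm ∘ σ ∘ v ∈ W ↔ v ∈ W
        rw [show σ.symm ∘ σ ∘ v = v by ext; simp]
      map_rel_iff' := by
        intro W W'
        constructor
        · intro h v hv
          have e : σ ∘ σ.symm ∘ v = v := by ext; simp
          have := @h (σ.symm ∘ v) (by change σ ∘ σ.symm ∘ v ∈ W; rwa [e])
          change σ ∘ σ.symm ∘ v ∈ W' at this
          rwa [e] at this
        · intro h v hv
          exact h hv }
  refine ⟨ρ', ?_, fun h => ?_⟩
  · rw [← Representation.irreducible_iff_isSimpleModule_asModule] at hρ ⊢
    exact E.isSimpleOrder_iff.2 hρ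
  · rw [h', Matrix.trace_toLin'_eq]
    conv_rhs => rw [← Matrix.toLin'_toMatrix' (ρ h), Matrix.trace_toLin'_eq]
    simp [Matrix.trace, map_sum]

theorem aux_bound {H : Type*} [Group H] [Fintype H] {n m : ℕ} {ι : Type} [Fintype ι]
    (ρ : Representation ℂ H (Fin n → ℂ)) (θ : ι → Representation ℂ H (Fin m → ℂ))
    (hθ : ∀ i, IsSimpleModule (MonoidAlgebra ℂ H) (θ i).asModule)
    (hinj : ∀ i j, (θ i).character = (θ j).character → i = j)
    (hne : ∀ i, ∑ h, ρ.character h * (θ i).character h⁻¹ ≠ 0) :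
    Fintype.card ι * m ≤ n := by
  have hG : (Nat.card H : ℂ) ≠ 0 := by simp
  let _ := invertibleOfNonzero hG
  have hex : ∀ i, ∃ f : (θ i).asModule →ₗ[MonoidAlgebra ℂ H] ρ.asModule, f ≠ 0 := by
    intro i
    have h1 := Representation.card_inv_mul_sum_char_mul_char_eq_finrank (θ i) ρ
    by_contra! hcon
    have : Subsingleton ((θ i).IntertwiningMap ρ) := by
      refine ⟨fun a b => ?_⟩
      apply (Representation.IntertwiningMap.equivLinearMapAsModule (θ i) ρ).injective
      exact (hcon _).trans (hcon _).symm
    rw [Module.finrank_zero_of_subsingleton] at h1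
    simp only [Nat.cast_zero, mul_eq_zero, inv_eq_zero] at h1
    exact h1.elim hG (hne i)
  choose f hf using hex
  have hfi : ∀ i, Function.Injective (f i) := fun i =>
    (LinearMap.injective_or_eq_zero (f i)).resolve_right (hf i)
  let S := fun i => LinearMap.range (f i)
  let e : ∀ i, (θ i).asModule ≃ₗ[MonoidAlgebra ℂ H] S i := fun i => LinearEquiv.ofInjective _ (hfi i)
  have hS : ∀ i, IsSimpleModule (MonoidAlgebra ℂ H) (S i) := fun i => IsSimpleModule.congr (e i).symm
  let c := fun i => isotypicComponent (MonoidAlgebra ℂ H) ρ.asModule (S i)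
  have hc : ∀ i, c i ∈ isotypicComponents (MonoidAlgebra ℂ H) ρ.asModule := fun i => ⟨S i, hS i, rfl⟩
  have hcinj : Function.Injective c := by
    intro i j hij
    have hle : S i ≤ isotypicComponent (MonoidAlgebra ℂ H) ρ.asModule (S j) := by
      exact (Submodule.le_isotypicComponent (S i)).trans (le_of_eq hij)
    obtain ⟨k⟩ := isIsotypicOfType_submodule_iff.mp (.isotypicComponent _ _ (S j)) _ hle
    let q := ((e i).trans k).trans (e j).symm
    apply hinj
    let q' := (Representation.IntertwiningMap.equivLinearMapAsModule (θ i) (θ j)).symm q.toLinearMap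
    exact Representation.char_iso (Representation.IntertwiningMap.ofBijective q' q.bijective)
  have hind : iSupIndep S := by
    have h0 : iSupIndep c := by
      have := (sSupIndep_iff _).1 (sSupIndep_isotypicComponents (MonoidAlgebra ℂ H) ρ.asModule)
      exact this.comp (f := fun i => (⟨c i, hc i⟩ : isotypicComponents (MonoidAlgebra ℂ H) ρ.asModule))
        (fun i j h => hcinj (congrArg Subtype.val h))
    exact h0.mono fun i => Submodule.le_isotypicComponent _
  have hI := hind.dfinsupp_lsum_injective
  let F : (Π₀ i, S i) →ₗ[ℂ] ρ.asModule :=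
    (DFinsupp.lsum ℕ (M := fun i => S i) fun i => (S i).subtype).restrictScalars ℂ
  have := LinearMap.finrank_le_finrank_of_injective (f := F) hI
  have hfr : ∀ i, Module.finrank ℂ (S i) = m := by
    intro i
    rw [← ((e i).restrictScalars ℂ).finrank_eq, (θ i).asModuleEquiv.finrank_eq]
    simp
  have hfin : ∀ i, Module.Finite ℂ (S i) := fun i => Module.Finite.equiv ((e i).restrictScalars ℂ)
  have hfree : ∀ i, Module.Free ℂ (S i) := fun i => Module.Free.of_equiv ((e i).restrictScalars ℂ)
  have h3 := Module.finrank_directSum (R := ℂ) (fun i => S i)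
  rw [ρ.asModuleEquiv.finrank_eq] at this
  change Module.finrank ℂ (Π₀ i, S i) = _ at h3
  rw [h3] at this
  simpa [hfr] using this

theorem aux_card {H : Type*} [Fintype H] (ψ : H → ℂ) : #(Qfield ψ) ≤ ℵ₀ := by
  unfold Qfield
  refine (IntermediateField.cardinalMk_adjoin_le ℚ (Set.range ψ)).trans ?_
  simp [Set.countable_range ψ, Cardinal.le_aleph0_iff_set_countable]

theorem aux_eq {H : Type*} (ψ : H → ℂ) (σ σ' : ℂ ≃+* ℂ) (h : ∀ x, σ (ψ x) = σ' (ψ x)) :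
    ∀ x ∈ Qfield ψ, σ x = σ' x := by
  intro x hx
  induction hx using IntermediateField.adjoin_induction with
  | mem x hx => obtain ⟨y, rfl⟩ := hx; exact h y
  | algebraMap q => simp
  | add x y _ _ hx hy => simp [hx, hy]
  | inv x _ hx => simp [hx]
  | mul x y _ _ hx hy => simp [hx, hy]

theorem stmt6 {G : Type*} [Group G] [Fintype G] (H : Subgroup G)
    (ψ : ↥H → ℂ) (χ : G → ℂ) (m n : ℕ)
    (hψ : IsIrrCharOfDeg ↥H ψ m) (hχ : IsIrrCharOfDeg G χ n)
    (hind : ∀ g, χ g = inducedChar H ψ g)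
    (hsub : Qfield χ ≤ Qfield ψ)
    (τ : (Qfield ψ) ≃ₐ[ℚ] (Qfield ψ))
    (hτ : ∀ (x : ℂ) (hx : x ∈ Qfield χ), τ ⟨x, hsub hx⟩ = ⟨x, hsub hx⟩)
    (ψτ : ↥H → ℂ)
    (hψτ : ∀ h : ↥H, ∃ hm : ψ h ∈ Qfield ψ, ψτ h = ((τ ⟨ψ h, hm⟩ : Qfield ψ) : ℂ)) :
    (IsIrrChar ↥H ψτ ∧ innerChar (fun h : ↥H => χ (h : G)) ψτ ≠ 0) ∧
      relDeg (Qfield χ) (Qfield ψ) * m ≤ n := by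
  obtain ⟨ρ, hρ, hρψ⟩ := hψ
  obtain ⟨π, hπ, hπχ⟩ := hχ
  have hH : (Nat.card H : ℂ) ≠ 0 := by simp
  have hχc : χ = π.character := funext hπχ
  have hfrob : ∑ h : H, χ h * ψ h⁻¹ = Nat.card H := by
    apply aux_frob H ψ χ _ hind
    · rw [hχc]; exact aux_norm π hπ
    · intro g x; rw [hχc]; simp
  have hmem : ∀ g, χ g ∈ Qfield χ := fun g => IntermediateField.subset_adjoin _ _ ⟨g, rfl⟩
  have hmemψ : ∀ g, ψ g ∈ Qfield ψ := fun g => IntermediateField.subset_adjoin _ _ ⟨g, rfl⟩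
  have hsum : ∀ σ : ℂ ≃+* ℂ, (∀ x ∈ Qfield χ, σ x = x) →
      ∑ h : H, χ h * σ (ψ h⁻¹) = Nat.card H := by
    intro σ hσ
    have := congrArg σ hfrob
    rw [map_sum, map_natCast] at this
    rw [← this]
    refine Finset.sum_congr rfl fun h _ => ?_
    rw [map_mul, hσ _ (hmem _)]
  refine ⟨?_, ?_⟩
  · obtain ⟨σ, hσ⟩ := aux_ext (aux_card ψ) ((Qfield ψ).val.toRingHom.comp (τ : _ →+* _))
    have hσχ : ∀ x ∈ Qfield χ, σ x = x := by
      intro x hx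
      have h1 := hσ ⟨x, hsub hx⟩
      have h2 := congrArg Subtype.val (hτ x hx)
      exact h1.trans h2
    have hσψ : ∀ h, ψτ h = σ (ψ h) := by
      intro h
      obtain ⟨hm, e⟩ := hψτ h
      rw [e]
      exact (hσ ⟨ψ h, hm⟩).symm
    obtain ⟨ρ', hρ', htr⟩ := aux_gal σ ρ hρ
    have hch : ∀ h, ψτ h = LinearMap.trace ℂ _ (ρ' h) := by
      intro h; rw [htr, ← hρψ, hσψ]
    refine ⟨⟨m, ρ', hρ', hch⟩, ?_⟩
    unfold innerChar
    have : ∀ h, (starRingEnd ℂ) (ψτ h) = σ (ψ h⁻¹) := by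
      intro h; rw [← hσψ, hch, hch, aux_conj]
    simp_rw [this]
    rw [hsum σ hσχ]
    simp
  · by_cases h0 : Module.finrank ℚ (Qfield ψ) = 0
    · simp [relDeg, h0]
    have hfd : FiniteDimensional ℚ (Qfield ψ) := Module.finite_of_finrank_pos (Nat.pos_of_ne_zero h0)
    let K' : IntermediateField (Qfield χ) ℂ := IntermediateField.extendScalars hsub
    have hfd' : FiniteDimensional ℚ K' := hfd
    have hfdF : FiniteDimensional (Qfield χ) K' := FiniteDimensional.right ℚ _ _
    have hfdχ : FiniteDimensional ℚ (Qfield χ) := FiniteDimensional.left ℚ (Qfield χ) K'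
    have hrel : relDeg (Qfield χ) (Qfield ψ) = Fintype.card (K' →ₐ[Qfield χ] ℂ) := by
      rw [AlgHom.card]
      have : Module.finrank ℚ (Qfield χ) * Module.finrank (Qfield χ) K' =
        Module.finrank ℚ (Qfield ψ) := Module.finrank_mul_finrank ℚ (Qfield χ) K'
      unfold relDeg
      rw [← this]
      exact Nat.mul_div_cancel_left _ Module.finrank_pos
    rw [hrel]
    have hex : ∀ φ : K' →ₐ[Qfield χ] ℂ, ∃ e : ℂ ≃+* ℂ, ∀ x : Qfield ψ, e x = φ x :=
      fun φ => aux_ext (aux_card ψ) φ.toRingHom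
    choose σ hσ using hex
    have hσχ : ∀ φ, ∀ x ∈ Qfield χ, σ φ x = x := by
      intro φ x hx
      exact (hσ φ ⟨x, hsub hx⟩).trans (φ.commutes ⟨x, hx⟩)
    choose θ hθ htr using fun φ => aux_gal (σ φ) ρ hρ
    have hch : ∀ φ h, (θ φ).character h = σ φ (ψ h) := by
      intro φ h; rw [hρψ]; exact htr φ h
    refine aux_bound (π.comp H.subtype) θ hθ ?_ ?_
    · intro φ φ' h
      have := aux_eq ψ (σ φ) (σ φ') (fun x => by rw [← hch, ← hch, h])
      ext x
      have := this x x.2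
      exact (hσ φ x).symm.trans (this.trans (hσ φ' x))
    · intro φ
      have h1 := hsum (σ φ) (hσχ φ)
      have h2 : ∀ h : H, Representation.character (π.comp H.subtype) h = χ h := fun h => (hπχ h).symm
      simp_rw [hch, h2]
      rw [h1]
      exact hH
end

section
/- Suppose that for every finite group G and every nonlinear χ ∈ Irr(G) there exist a proper subgroup H < G and ψ ∈ Irr(H) with ℚ(χ) ⊆ ℚ(ψ) and [ℚ(ψ) : ℚ(χ)] ≤ χ(1)/ψ(1). Then for every finite group G and χ ∈ Irr(G), the group G contains an element of order c(χ) (Feit's conjecture). -/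
open scoped Classical

lemma Qcyc_cyclo (n : ℕ) (hn : 0 < n) : IsCyclotomicExtension {n} ℚ (Qcyc n) := by
  have h := IntermediateField.isCyclotomicExtension_adjoin_of_exists_isPrimitiveRoot {n} ℚ ℂ
    (fun m _ hm => ⟨_, Complex.isPrimitiveRoot_exp m hm⟩)
  have e : {b : ℂ | ∃ m ∈ ({n} : Set ℕ), m ≠ 0 ∧ b ^ m = 1} = {x : ℂ | x ^ n = 1} := by
    ext x
    simp [hn.ne']
  rw [e] at h
  exact h

lemma Qcyc_fin (n : ℕ) (hn : 0 < n) : FiniteDimensional ℚ (Qcyc n) := by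
  have := Qcyc_cyclo n hn
  have : NeZero n := ⟨hn.ne'⟩
  exact IsCyclotomicExtension.finite_of_singleton n ℚ _

lemma Qcyc_finrank (n : ℕ) (hn : 0 < n) : Module.finrank ℚ (Qcyc n) = n.totient := by
  have := Qcyc_cyclo n hn
  have : NeZero n := ⟨hn.ne'⟩
  exact IsCyclotomicExtension.finrank _ (Polynomial.cyclotomic.irreducible_rat hn)

lemma Qcyc_mono {m n : ℕ} (h : m ∣ n) : Qcyc m ≤ Qcyc n := by
  apply IntermediateField.adjoin.mono
  intro x hx
  obtain ⟨k, rfl⟩ := h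
  simp only [Set.mem_ofPred_eq] at hx ⊢
  rw [pow_mul, hx, one_pow]

lemma totient_gcd_lcm (a b : ℕ) (ha : 0 < a) :
    (a.gcd b).totient * (a.lcm b).totient = a.totient * b.totient := by
  have h1 := Nat.totient_gcd_mul_totient_mul a b
  have h2 := Nat.totient_gcd_mul_totient_mul (a.gcd b) (a.lcm b)
  have h3 : (a.gcd b).gcd (a.lcm b) = a.gcd b :=
    Nat.gcd_eq_left ((Nat.gcd_dvd_left a b).trans (Nat.dvd_lcm_left a b))
  rw [h3, Nat.gcd_mul_lcm, h1] at h2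
  exact (Nat.eq_of_mul_eq_mul_right (Nat.gcd_pos_of_pos_left b ha) h2).symm

lemma Qcyc_inf (a b : ℕ) (ha : 0 < a) (hb : 0 < b) :
    Qcyc (a.gcd b) = Qcyc a ⊓ Qcyc b := by
  have fa := Qcyc_fin a ha
  have fb := Qcyc_fin b hb
  have hg : 0 < a.gcd b := Nat.gcd_pos_of_pos_left b ha
  have hl : 0 < a.lcm b := Nat.lcm_pos ha hb
  have ca := Qcyc_cyclo a ha
  have cb := Qcyc_cyclo b hb
  have : NeZero a := ⟨ha.ne'⟩
  have : NeZero b := ⟨hb.ne'⟩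
  have : NeZero (a.lcm b) := ⟨hl.ne'⟩
  have hle : Qcyc (a.gcd b) ≤ Qcyc a ⊓ Qcyc b :=
    le_inf (Qcyc_mono (Nat.gcd_dvd_left a b)) (Qcyc_mono (Nat.gcd_dvd_right a b))
  have hsup : Module.finrank ℚ ↥(Qcyc a ⊔ Qcyc b) = (a.lcm b).totient := by
    have h3 := IntermediateField.isCyclotomicExtension_lcm_sup ℚ ℂ a b (Qcyc a) (Qcyc b)
      (h₁ := ca) (h₂ := cb)
    have h4 : IsCyclotomicExtension {a.lcm b} ℚ ↥(Qcyc a ⊔ Qcyc b) := h3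
    exact IsCyclotomicExtension.finrank _ (Polynomial.cyclotomic.irreducible_rat hl)
  apply IntermediateField.eq_of_le_of_finrank_le hle
  rw [Qcyc_finrank _ hg]
  have hA := IntermediateField.finrank_bot_mul_relfinrank
    (inf_le_left : Qcyc a ⊓ Qcyc b ≤ Qcyc a)
  have hB := IntermediateField.finrank_bot_mul_relfinrank
    (inf_le_right : Qcyc a ⊓ Qcyc b ≤ Qcyc b)
  have hS := IntermediateField.finrank_bot_mul_relfinrank
    (inf_le_left.trans le_sup_left : Qcyc a ⊓ Qcyc b ≤ Qcyc a ⊔ Qcyc b)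
  have key : (Qcyc a ⊓ Qcyc b).relfinrank (Qcyc a ⊔ Qcyc b) ≤
      (Qcyc a ⊓ Qcyc b).relfinrank (Qcyc a) * (Qcyc a ⊓ Qcyc b).relfinrank (Qcyc b) := by
    rw [IntermediateField.relfinrank_eq_finrank_of_le inf_le_left,
      IntermediateField.relfinrank_eq_finrank_of_le inf_le_right,
      IntermediateField.relfinrank_eq_finrank_of_le (inf_le_left.trans le_sup_left),
      ← IntermediateField.extendScalars_sup inf_le_left inf_le_right]
    exact IntermediateField.finrank_sup_le _ _
  rw [Qcyc_finrank a ha] at hA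
  rw [Qcyc_finrank b hb] at hB
  rw [hsup] at hS
  have ht := totient_gcd_lcm a b ha
  have hlpos : 0 < (a.lcm b).totient := Nat.totient_pos.2 hl
  generalize Module.finrank ℚ ↥(Qcyc a ⊓ Qcyc b) = k at *
  generalize (Qcyc a ⊓ Qcyc b).relfinrank (Qcyc a) = x at *
  generalize (Qcyc a ⊓ Qcyc b).relfinrank (Qcyc b) = y at *
  generalize (Qcyc a ⊓ Qcyc b).relfinrank (Qcyc a ⊔ Qcyc b) = z at *
  refine Nat.le_of_mul_le_mul_right ?_ hlpos
  rw [ht, ← hA, ← hB, ← hS]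
  calc k * (k * z) ≤ k * (k * (x * y)) := by gcongr
    _ = k * x * (k * y) := by ring

lemma condF_dvd (F : IntermediateField ℚ ℂ) (n : ℕ) (hn : 0 < n) (h : F ≤ Qcyc n) :
    condF F ∣ n := by
  obtain ⟨h1, h2⟩ : condF F ∈ {n : ℕ | 0 < n ∧ F ≤ Qcyc n} := Nat.sInf_mem ⟨n, hn, h⟩
  have h3 : condF F ≤ (condF F).gcd n := by
    apply Nat.sInf_le
    refine ⟨Nat.gcd_pos_of_pos_left n h1, ?_⟩
    rw [Qcyc_inf _ _ h1 hn]
    exact le_inf h2 h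
  have h4 := le_antisymm (Nat.le_of_dvd h1 (Nat.gcd_dvd_left _ n)) h3
  exact Nat.gcd_eq_left_iff_dvd.1 h4

lemma linear_case (G : Type) [Group G] [Fintype G] (χ : G → ℂ) (h : IsIrrCharOfDeg G χ 1) :
    ∃ g : G, Qfield χ ≤ Qcyc (orderOf g) := by
  obtain ⟨ρ, -, hρ⟩ := h
  let l : G →* ℂ := (LinearMap.det : ((Fin 1 → ℂ) →ₗ[ℂ] (Fin 1 → ℂ)) →* ℂ).comp ρ
  have hl : ∀ g, χ g = l g := by
    intro g
    rw [hρ]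
    change _ = LinearMap.det (ρ g)
    rw [LinearMap.trace_eq_matrix_trace ℂ (Pi.basisFun ℂ (Fin 1)),
      ← LinearMap.det_toMatrix (Pi.basisFun ℂ (Fin 1)), Matrix.trace_fin_one,
      Matrix.det_fin_one]
  let u : G →* ℂˣ := l.toHomUnits
  have : Finite u.range := inferInstance
  have hc : IsCyclic u.range := inferInstance
  obtain ⟨⟨_, g, rfl⟩, hg⟩ := hc.exists_generator
  refine ⟨g, ?_⟩
  apply IntermediateField.adjoin.mono
  rintro _ ⟨x, rfl⟩
  obtain ⟨k, hk⟩ := Subgroup.mem_zpowers_iff.1 (hg ⟨u x, x, rfl⟩)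
  have hk' : u g ^ k = u x := congrArg Subtype.val hk
  have : u x ^ orderOf g = 1 := by
    rw [← hk', ← zpow_natCast, zpow_comm, zpow_natCast, ← map_pow, pow_orderOf_eq_one, map_one,
      one_zpow]
  have h2 := congrArg (Units.val) this
  simp only [Set.mem_ofPred_eq]
  rw [hl]
  simpa [u] using h2

lemma deg_pos (G : Type) [Group G] (χ : G → ℂ) (d : ℕ) (h : IsIrrCharOfDeg G χ d) : 0 < d := by
  obtain ⟨ρ, hs, -⟩ := h
  rcases Nat.eq_zero_or_pos d with rfl | hd
  · have := IsSimpleModule.nontrivial (MonoidAlgebra ℂ G) ρ.asModule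
    have h2 : Subsingleton ρ.asModule := inferInstanceAs (Subsingleton (Fin 0 → ℂ))
    exact absurd this (not_nontrivial_iff_subsingleton.2 h2)
  · exact hd

theorem stmt9
    (hyp : ∀ (G : Type) [Group G] [Fintype G] (χ : G → ℂ) (d : ℕ),
      IsIrrCharOfDeg G χ d → 1 < d →
      ∃ (H : Subgroup G) (ψ : ↥H → ℂ) (e : ℕ), H ≠ ⊤ ∧ IsIrrCharOfDeg ↥H ψ e ∧
        Qfield χ ≤ Qfield ψ ∧ relDeg (Qfield χ) (Qfield ψ) * e ≤ d) :
    ∀ (G : Type) [Group G] [Fintype G] (χ : G → ℂ), IsIrrChar G χ →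
      ∃ g : G, orderOf g = condF (Qfield χ) := by
  have main : ∀ (N : ℕ) (G : Type) [Group G] [Fintype G] (χ : G → ℂ), Nat.card G ≤ N →
      IsIrrChar G χ → ∃ g : G, Qfield χ ≤ Qcyc (orderOf g) := by
    intro N
    induction N with
    | zero =>
      intro G _ _ χ hN
      exact absurd hN (by have := Nat.card_pos (α := G); omega)
    | succ N ih =>
      rintro G _ _ χ hN ⟨d, hd⟩
      have hpos := deg_pos G χ d hd
      rcases Nat.lt_or_ge 1 d with h1 | h1
      · obtain ⟨H, ψ, e, hH, hψ, hle, -⟩ := hyp G χ d hd h1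
        have hlt : Nat.card H < Nat.card G :=
          lt_of_le_of_ne H.card_le_card_group (fun h => hH (H.eq_top_of_card_eq h))
        obtain ⟨g, hg⟩ := ih H ψ (by omega) ⟨e, hψ⟩
        refine ⟨g, hle.trans ?_⟩
        rwa [Subgroup.orderOf_coe]
      · obtain rfl : d = 1 := by omega
        exact linear_case G χ hd
  intro G _ _ χ hχ
  obtain ⟨g, hg⟩ := main _ G χ le_rfl hχ
  have hd := condF_dvd _ _ (orderOf_pos g) hg
  refine ⟨g ^ (orderOf g / condF (Qfield χ)), ?_⟩
  exact orderOf_pow_orderOf_div (orderOf_pos g).ne' hd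
end

section
/- Let p be a prime, G a finite group, P a Sylow p-subgroup, and χ ∈ Irr(G) of degree coprime to p. Suppose α := lev_p(χ) ≥ 2 and that ℚ_p(χ_P) ⊆ ℚ(ζ_{p^α}), and suppose the number of linear constituents of the restriction χ_P of p-rationality level α is not divisible by p. Then ℚ(ζ_{p^α}) = ℚ_p(χ_P), i.e., every automorphism of ℚ(ζ_{p^α}) fixing ℚ_p(χ_P) is trivial. -/
open scoped Classical

/-- The algebra structure coming from the intermediate field. -/
noncomputable abbrev auxAlg (L : IntermediateField ℚ ℂ) : Algebra ℚ L :=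
  IntermediateField.algebra' L

attribute [local instance] auxAlg

lemma aux_primRoot_mem {n : ℕ} {z : ℂ} (hz : z ^ n = 1) : z ∈ Qcyc n :=
  IntermediateField.subset_adjoin _ _ hz

lemma aux_Qcyc_eq {n : ℕ} [NeZero n] {z : ℂ} (hz : IsPrimitiveRoot z n) :
    Qcyc n = IntermediateField.adjoin ℚ {z} := by
  apply le_antisymm
  · unfold Qcyc
    rw [IntermediateField.adjoin_le_iff]
    intro x hx
    obtain ⟨i, _, rfl⟩ := hz.eq_pow_of_pow_eq_one hx
    exact pow_mem (IntermediateField.mem_adjoin_simple_self ℚ z) i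
  · rw [IntermediateField.adjoin_le_iff]
    intro x hx
    rw [Set.mem_singleton_iff.mp hx]
    exact aux_primRoot_mem hz.pow_eq_one

lemma aux_cyc (n : ℕ) [NeZero n] : IsCyclotomicExtension {n} ℚ (Qcyc n) := by
  have hz := Complex.isPrimitiveRoot_exp n (NeZero.ne n)
  rw [aux_Qcyc_eq hz]
  have hS := IntermediateField.adjoin_simple_toSubalgebra_of_isAlgebraic (F := ℚ)
    ((hz.isIntegral (NeZero.pos n)).tower_top (A := ℚ)).isAlgebraic
  have key := hz.adjoin_isCyclotomicExtension ℚ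
  exact IsCyclotomicExtension.equiv {n} ℚ _ (Subalgebra.equivOfEq _ _ hS.symm)

lemma aux_lev {p : ℕ} (hp : p.Prime) {k n : ℕ} (hn : n ≠ 0) (hpn : p ∣ n)
    (h : Qcyc (p ^ k) ≤ Qcyc n) : p ^ k ∣ n := by
  have : NeZero n := ⟨hn⟩
  have : NeZero (p ^ k) := ⟨pow_ne_zero _ hp.ne_zero⟩
  have := aux_cyc n
  have : FiniteDimensional ℚ (Qcyc n) := IsCyclotomicExtension.finiteDimensional {n} ℚ _
  have hz := Complex.isPrimitiveRoot_exp (p ^ k) (NeZero.ne _)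
  have hw : IsPrimitiveRoot (⟨_, h (aux_primRoot_mem hz.pow_eq_one)⟩ : Qcyc n) (p ^ k) :=
    IsPrimitiveRoot.coe_submonoidClass_iff.mp hz
  have key := IsPrimitiveRoot.lcm_totient_le_finrank hw
    (IsCyclotomicExtension.zeta_spec n ℚ (Qcyc n))
    (Polynomial.cyclotomic.irreducible_rat
      (Nat.lcm_pos (Nat.pos_of_ne_zero (NeZero.ne (p ^ k))) (NeZero.pos n)))
  rw [IsCyclotomicExtension.finrank (Qcyc n)
    (Polynomial.cyclotomic.irreducible_rat (NeZero.pos n))] at key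
  by_contra hk
  obtain ⟨r, hr⟩ := Nat.dvd_lcm_right (p ^ k) n
  have hr1 : r ∣ p ^ k := by
    have : n * r ∣ n * p ^ k := by
      rw [← hr]; exact Nat.lcm_dvd (Dvd.intro_left _ rfl) (Dvd.intro _ rfl)
    exact (Nat.mul_dvd_mul_iff_left (NeZero.pos n)).mp this
  obtain ⟨j, _, rfl⟩ := (Nat.dvd_prime_pow hp).mp hr1
  rcases j with _ | j
  · apply hk
    have := Nat.dvd_lcm_left (p ^ k) n
    rwa [hr, pow_zero, mul_one] at this
  · have h1 : (p * n).totient ≤ (n * p ^ (j + 1)).totient := by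
      apply Nat.le_of_dvd
      · exact Nat.totient_pos.mpr (Nat.mul_pos (NeZero.pos n) (pow_pos hp.pos _))
      · apply Nat.totient_dvd_of_dvd
        exact ⟨p ^ j, by ring⟩
    rw [Nat.totient_mul_of_prime_of_dvd hp hpn, ← hr] at h1
    have h3 := Nat.totient_pos.mpr (NeZero.pos n)
    have h4 := hp.two_le
    nlinarith

lemma aux_lam {H : Type*} [Group H] [Finite H] {p : ℕ} (hp : p.Prime) (hH : IsPGroup p H)
    (lam : H →* ℂˣ) {α : ℕ} (h2 : 2 ≤ α)
    (hlev : padicValNat p (condF (Qfield (fun x : H => ((lam x : ℂˣ) : ℂ)))) = α) :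
    (∀ x, lam x ^ p ^ α = 1) ∧ ∃ x, IsPrimitiveRoot ((lam x : ℂˣ) : ℂ) (p ^ α) := by
  have := Fact.mk hp
  have : Finite lam.range := Set.finite_range lam
  obtain ⟨⟨_, x0, rfl⟩, hg⟩ := IsCyclic.exists_generator (α := lam.range)
  obtain ⟨i, hi⟩ := hH x0
  obtain ⟨k, _, hk⟩ := (Nat.dvd_prime_pow hp).mp
    (orderOf_dvd_of_pow_eq_one (x := lam x0) (n := p ^ i) (by rw [← map_pow, hi, map_one]))
  have hprim : IsPrimitiveRoot ((lam x0 : ℂˣ) : ℂ) (p ^ k) := by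
    rw [IsPrimitiveRoot.coe_units_iff, ← hk]
    exact IsPrimitiveRoot.orderOf _
  have : NeZero (p ^ k) := ⟨pow_ne_zero _ hp.ne_zero⟩
  have hall : ∀ x, lam x ^ p ^ k = 1 := by
    intro x
    obtain ⟨m, hm⟩ := Subgroup.mem_zpowers_iff.mp (hg ⟨lam x, x, rfl⟩)
    have hm' : lam x0 ^ m = lam x := congrArg Subtype.val hm
    rw [← hm', ← hk, ← zpow_natCast, ← zpow_mul, mul_comm, zpow_mul, zpow_natCast,
      pow_orderOf_eq_one, one_zpow]
  have hQ : Qfield (fun x : H => ((lam x : ℂˣ) : ℂ)) = Qcyc (p ^ k) := by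
    apply le_antisymm
    · unfold Qfield
      rw [IntermediateField.adjoin_le_iff]
      rintro _ ⟨x, rfl⟩
      apply aux_primRoot_mem
      simpa using congrArg Units.val (hall x)
    · rw [aux_Qcyc_eq hprim, IntermediateField.adjoin_le_iff]
      rintro _ rfl
      exact IntermediateField.subset_adjoin _ _ ⟨x0, rfl⟩
  rw [hQ] at hlev
  have hmem : p ^ k ∈ {n : ℕ | 0 < n ∧ Qcyc (p ^ k) ≤ Qcyc n} := ⟨NeZero.pos _, le_rfl⟩
  have hc := Nat.sInf_mem ⟨_, hmem⟩
  have hle : condF (Qcyc (p ^ k)) ≤ p ^ k := Nat.sInf_le hmem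
  change 0 < condF (Qcyc (p ^ k)) ∧ _ ≤ Qcyc (condF (Qcyc (p ^ k))) at hc
  obtain ⟨hc0, hc1⟩ := hc
  have hdvd : p ^ α ∣ condF (Qcyc (p ^ k)) := by rw [← hlev]; exact pow_padicValNat_dvd
  have hpd : p ∣ condF (Qcyc (p ^ k)) := (dvd_pow_self p (by omega)).trans hdvd
  have hdv2 := aux_lev hp hc0.ne' hpd hc1
  have h3 := (padicValNat_dvd_iff_le hc0.ne').mp hdv2
  have h4 : α ≤ k := (Nat.pow_le_pow_iff_right hp.one_lt).mp ((Nat.le_of_dvd hc0 hdvd).trans hle)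
  have : k = α := by omega
  subst this
  exact ⟨hall, x0, hprim⟩

lemma aux_Qfield_pow {H : Type*} [Group H] (lam : H →* ℂˣ) (m : ℕ) :
    Qfield (fun x : H => (((lam ^ m) x : ℂˣ) : ℂ)) ≤ Qfield (fun x : H => ((lam x : ℂˣ) : ℂ)) := by
  unfold Qfield
  rw [IntermediateField.adjoin_le_iff]
  rintro _ ⟨x, rfl⟩
  simp only [MonoidHom.pow_apply, Units.val_pow_eq_pow_val]
  have hx : ((lam x : ℂˣ) : ℂ) ∈
      IntermediateField.adjoin ℚ (Set.range fun x : H => ((lam x : ℂˣ) : ℂ)) :=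
    IntermediateField.subset_adjoin _ _ (Set.mem_range_self x)
  exact pow_mem hx m

lemma aux_pow_mul {H : Type*} [Group H] (lam : H →* ℂˣ) (a b : ℕ) :
    (lam ^ a) ^ b = lam ^ (a * b) := by
  ext x
  simp [pow_mul]

lemma aux_inner {H : Type*} [Group H] [Fintype H] {L : IntermediateField ℚ ℂ} (σ : L ≃ₐ[ℚ] L)
    (ψ : H → ℂ) (hψ : ∀ x, ∃ y : L, (y : ℂ) = ψ x ∧ σ y = y) (lam : H →* ℂˣ) (m : ℕ)
    (hlam : ∀ x, ∃ y : L, (y : ℂ) = lam x ∧ σ y = y ^ m) 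
    (h : innerChar ψ (fun x => ((lam x : ℂˣ) : ℂ)) ≠ 0) :
    innerChar ψ (fun x => (((lam ^ m) x : ℂˣ) : ℂ)) ≠ 0 := by
  have hconj : ∀ (μ : H →* ℂˣ) x, (starRingEnd ℂ) ((μ x : ℂˣ) : ℂ) = ((μ x : ℂˣ) : ℂ)⁻¹ := by
    intro μ x
    have hfin : IsOfFinOrder ((μ x : ℂˣ) : ℂ) :=
      MonoidHom.isOfFinOrder (Units.coeHom ℂ) (MonoidHom.isOfFinOrder μ (isOfFinOrder_of_finite x))
    exact (Complex.inv_eq_conj hfin.norm_eq_one).symm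
  choose a ha hσa using hψ
  choose b hb hσb using hlam
  unfold innerChar at h ⊢
  have e1 : ∑ x, ψ x * (starRingEnd ℂ) ((lam x : ℂˣ) : ℂ) = ((∑ x, a x * (b x)⁻¹ : L) : ℂ) := by
    push_cast
    refine Finset.sum_congr rfl fun x _ => ?_
    rw [hconj, ha, hb]
  have e2 : ∑ x, ψ x * (starRingEnd ℂ) (((lam ^ m) x : ℂˣ) : ℂ)
      = ((σ (∑ x, a x * (b x)⁻¹) : L) : ℂ) := by
    rw [map_sum]
    push_cast
    refine Finset.sum_congr rfl fun x _ => ?_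
    rw [hconj, map_mul, map_inv₀, hσa, hσb]
    push_cast
    rw [ha, hb]
    simp
  rw [e2]
  rw [e1] at h
  refine mul_ne_zero (left_ne_zero_of_mul h) ?_
  have h' := right_ne_zero_of_mul h
  intro h0
  apply h'
  have h1 : σ (∑ x, a x * (b x)⁻¹) = 0 := by exact_mod_cast h0
  rw [(map_eq_zero_iff σ σ.injective).mp h1]
  rfl

theorem stmt14 {G : Type*} [Group G] [Fintype G] (p : ℕ) (hp : p.Prime)
    (P : Sylow p G) (χ : G → ℂ) (d : ℕ) (hχ : IsIrrCharOfDeg G χ d) (hd : ¬ p ∣ d)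
    (α : ℕ) (hα : α = padicValNat p (condF (Qfield χ))) (h2 : 2 ≤ α)
    (hsub : Qcyc p ⊔ Qfield (fun x : ↥(P : Subgroup G) => χ (x : G)) ≤ Qcyc (p ^ α))
    (hnum : ¬ p ∣ Nat.card {lam : ↥(P : Subgroup G) →* ℂˣ //
      innerChar (fun x : ↥(P : Subgroup G) => χ (x : G))
          (fun x => ((lam x : ℂˣ) : ℂ)) ≠ 0 ∧
        padicValNat p (condF (Qfield (fun x : ↥(P : Subgroup G) => ((lam x : ℂˣ) : ℂ)))) = α}) :
    Qcyc (p ^ α) = Qcyc p ⊔ Qfield (fun x : ↥(P : Subgroup G) => χ (x : G)) := by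
  have := Fact.mk hp
  have hne : NeZero (p ^ α) := ⟨pow_ne_zero _ hp.ne_zero⟩
  refine le_antisymm ?_ hsub
  have := aux_cyc (p ^ α)
  have : FiniteDimensional ℚ (Qcyc (p ^ α)) :=
    IsCyclotomicExtension.finiteDimensional {p ^ α} ℚ _
  have : IsGalois ℚ (Qcyc (p ^ α)) := IsCyclotomicExtension.isGalois {p ^ α} ℚ _
  suffices hbot : (IntermediateField.restrict hsub).fixingSubgroup = ⊥ by
    have htop := IsGalois.fixedField_fixingSubgroup (IntermediateField.restrict hsub)
    rw [hbot] at htop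
    intro x hx
    have : (⟨x, hx⟩ : Qcyc (p ^ α)) ∈ IntermediateField.restrict hsub := by
      rw [← htop]
      simp
    exact (IntermediateField.mem_restrict hsub _).mp this
  rw [eq_bot_iff]
  intro σ hσ
  rw [IntermediateField.mem_fixingSubgroup_iff] at hσ
  have hfix : ∀ y : Qcyc (p ^ α),
      (y : ℂ) ∈ Qcyc p ⊔ Qfield (fun x : ↥(P : Subgroup G) => χ (x : G)) → σ y = y :=
    fun y hy => hσ y ((IntermediateField.mem_restrict hsub y).mpr hy)
  have hz := IsCyclotomicExtension.zeta_spec (p ^ α) ℚ (Qcyc (p ^ α))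
  set z := IsCyclotomicExtension.zeta (p ^ α) ℚ (Qcyc (p ^ α)) with hzdef
  obtain ⟨m, _, hm⟩ := hz.eq_pow_of_pow_eq_one (ξ := σ z)
    (by rw [← map_pow, hz.pow_eq_one, map_one])
  have hroot : ∀ y : Qcyc (p ^ α), y ^ p ^ α = 1 → σ y = y ^ m := by
    intro y hy
    obtain ⟨i, _, rfl⟩ := hz.eq_pow_of_pow_eq_one hy
    rw [map_pow, ← hm, ← pow_mul, ← pow_mul, mul_comm]
  -- the exponent is one modulo p
  have hm1 : (p : ℤ) ∣ (m : ℤ) - 1 := by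
    have hw : IsPrimitiveRoot (z ^ p ^ (α - 1)) p :=
      hz.pow (NeZero.pos _) (by rw [← pow_succ]; congr 1; omega)
    have h1 : σ (z ^ p ^ (α - 1)) = z ^ p ^ (α - 1) := by
      apply hfix
      refine le_sup_left (a := Qcyc p) (aux_primRoot_mem ?_)
      exact_mod_cast congrArg Subtype.val hw.pow_eq_one
    have h2' : σ (z ^ p ^ (α - 1)) = (z ^ p ^ (α - 1)) ^ m := by
      rw [map_pow, ← hm, ← pow_mul, ← pow_mul, mul_comm]
    rw [h1] at h2'
    have h3 : (z ^ p ^ (α - 1)) ^ ((m : ℤ) - 1) = 1 := by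
      rw [zpow_sub₀ (hw.ne_zero hp.ne_zero), zpow_natCast, ← h2', zpow_one,
        div_self (hw.ne_zero hp.ne_zero)]
    exact hw.zpow_eq_one_iff_dvd _ |>.mp h3
  have hmpow : m ^ p ^ (α - 1) ≡ 1 [MOD p ^ α] := by
    have := dvd_sub_pow_of_dvd_sub (R := ℤ) (p := p) (a := m) (b := 1) hm1 (α - 1)
    rw [show α - 1 + 1 = α by omega, one_pow] at this
    apply Nat.ModEq.symm
    rw [Nat.modEq_iff_dvd]
    exact_mod_cast this
  have hpowid : ∀ lam : ↥(P : Subgroup G) →* ℂˣ, (∀ x, lam x ^ p ^ α = 1) →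
      lam ^ (m ^ p ^ (α - 1)) = lam := by
    intro lam hl
    ext x
    have h1 : lam x ^ (m ^ p ^ (α - 1)) = lam x ^ 1 :=
      pow_eq_pow_iff_modEq.mpr (hmpow.of_dvd (orderOf_dvd_of_pow_eq_one (hl x)))
    rw [MonoidHom.pow_apply, h1, pow_one]
  have hstep : ∀ lam : ↥(P : Subgroup G) →* ℂˣ,
      (innerChar (fun x : ↥(P : Subgroup G) => χ (x : G))
          (fun x => ((lam x : ℂˣ) : ℂ)) ≠ 0 ∧
        padicValNat p (condF (Qfield (fun x : ↥(P : Subgroup G) => ((lam x : ℂˣ) : ℂ)))) = α) →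
      (innerChar (fun x : ↥(P : Subgroup G) => χ (x : G))
          (fun x => (((lam ^ m) x : ℂˣ) : ℂ)) ≠ 0 ∧
        padicValNat p (condF (Qfield
          (fun x : ↥(P : Subgroup G) => (((lam ^ m) x : ℂˣ) : ℂ)))) = α) := by
    rintro lam ⟨h1, h3⟩
    obtain ⟨hall, -⟩ := aux_lam hp P.2 lam h2 h3
    have hall' : ∀ x, ((lam x : ℂˣ) : ℂ) ^ p ^ α = 1 := fun x => by
      simpa using congrArg Units.val (hall x)
    constructor
    · refine aux_inner σ _ ?_ lam m ?_ h1
      · intro x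
        have hx : χ (x : G) ∈ Qcyc p ⊔ Qfield (fun x : ↥(P : Subgroup G) => χ (x : G)) :=
          le_sup_right (a := Qcyc p) (IntermediateField.subset_adjoin _ _ ⟨x, rfl⟩)
        exact ⟨⟨_, hsub hx⟩, rfl, hfix _ hx⟩
      · intro x
        refine ⟨⟨_, aux_primRoot_mem (hall' x)⟩, rfl, hroot _ ?_⟩
        exact Subtype.ext (hall' x)
    · have hQ : Qfield (fun x : ↥(P : Subgroup G) => (((lam ^ m) x : ℂˣ) : ℂ)) =
          Qfield (fun x : ↥(P : Subgroup G) => ((lam x : ℂˣ) : ℂ)) := by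
        apply le_antisymm (aux_Qfield_pow lam m)
        have := aux_Qfield_pow (lam ^ m) (m ^ (p ^ (α - 1) - 1))
        rwa [aux_pow_mul, ← pow_succ', Nat.sub_add_cancel (Nat.one_le_pow _ _ hp.pos),
          hpowid lam hall] at this
      rw [hQ, h3]
  let S := {lam : ↥(P : Subgroup G) →* ℂˣ //
      innerChar (fun x : ↥(P : Subgroup G) => χ (x : G))
          (fun x => ((lam x : ℂˣ) : ℂ)) ≠ 0 ∧
        padicValNat p (condF (Qfield (fun x : ↥(P : Subgroup G) => ((lam x : ℂˣ) : ℂ)))) = α}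
  change ¬ p ∣ Nat.card S at hnum
  have : Finite S := by
    apply Nat.finite_of_card_ne_zero
    intro h0
    exact hnum (h0 ▸ dvd_zero p)
  have : Fintype S := Fintype.ofFinite S
  let f : Function.End S := fun lam => ⟨lam.1 ^ m, hstep lam.1 lam.2⟩
  have hfn : ∀ n (lam : S), ((f ^ n) lam).1 = lam.1 ^ (m ^ n) := by
    intro n
    induction n with
    | zero => intro lam; ext x; simp; rfl
    | succ n ih =>
      intro lam
      rw [pow_succ]
      change ((f ^ n) (f lam)).1 = _
      rw [ih, pow_succ', ← aux_pow_mul]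
  have hf : f ^ p ^ (α - 1) = 1 := by
    funext lam
    apply Subtype.ext
    rw [hfn, hpowid lam.1 (aux_lam hp P.2 lam.1 h2 lam.2.2).1]
    rfl
  have hcard := Equiv.Perm.card_fixedPoints_modEq hf
  have hex : (Function.fixedPoints f).Nonempty := by
    by_contra hemp
    rw [Set.not_nonempty_iff_eq_empty] at hemp
    apply hnum
    rw [Nat.card_eq_fintype_card]
    apply (Nat.modEq_zero_iff_dvd).mp
    refine hcard.trans ?_
    rw [Fintype.card_eq_zero_iff.mpr (Set.isEmpty_coe_sort.mpr hemp)]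
  obtain ⟨lam, hlam⟩ := hex
  have hlam' : lam.1 ^ m = lam.1 := congrArg Subtype.val hlam
  obtain ⟨-, x, hx⟩ := aux_lam hp P.2 lam.1 h2 lam.2.2
  have hxm : ((lam.1 x : ℂˣ) : ℂ) ^ m = lam.1 x := by
    have := DFunLike.congr_fun hlam' x
    simpa using congrArg Units.val this
  have hzx : (z : ℂ) ^ m = z := by
    have hz1 : (z : ℂ) ^ p ^ α = 1 := by exact_mod_cast congrArg Subtype.val hz.pow_eq_one
    obtain ⟨i, _, hi⟩ := hx.eq_pow_of_pow_eq_one hz1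
    rw [← hi, ← pow_mul, mul_comm, pow_mul, hxm]
  have hσz : σ z = z := by
    rw [← hm]
    exact Subtype.ext (by simpa using hzx)
  rw [Subgroup.mem_bot]
  have : σ.toAlgHom = AlgHom.id ℚ _ :=
    (hz.powerBasis ℚ).algHom_ext (by simpa using hσz)
  ext y
  exact congrArg Subtype.val (DFunLike.congr_fun this y)
end
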